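/- Let p be a probability mass function on a finite product space 𝒳_W × 𝒳_Y × 𝒳_Z × 𝒳_U with coordinate variables W, Y, Z, U, and let c ∈ 𝒳_Z and u₀ ∈ 𝒳_U. Assume p(y, c, u) > 0 for all y ∈ 𝒳_Y and u ∈ 𝒳_U. If the context-specific independence W ⊥ Y | (Z, U) = (c, u₀) holds, and the context-specific independence W ⊥ U | Y, Z = c holds (i.e., p(w | y, c, u) = p(w | y, c) for all w, y, u), then for every u ∈ 𝒳_U the context-specific independence W ⊥ Y | (Z, U) = (c, u) holds. -/

import Mathlib

open Finset

/-!
For a fixed context, independence of `W` and `Y` says that the joint mass factors as `k w * p(y)`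
with `k` free of `y`. Independence of `W` and `U` given `Y` says that `p(w, y, u) = k_y w * p(y, u)`
with `k_y` free of `u`. If `p(y, u) > 0`, then also `p(y, u₀) > 0`, so `k_y` can be read off at
`u₀`, where the first independence makes it equal to `k`; if `p(y, u) = 0`, then `p(w, y, u) = 0`.
Either way `p(w, y, u) = k w * p(y, u)`, which is independence of `W` and `Y` at `u`.
-/

theorem eq_zero_of_not_sum_pos {ι M : Type*} [Fintype ι] [AddCommMonoid M] [LinearOrder M]
    [IsOrderedAddMonoid M] {f : ι → M} (hf : ∀ i, 0 ≤ f i) (h : ¬ 0 < ∑ i, f i) (i : ι) :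
    f i = 0 :=
  congrFun ((Fintype.sum_eq_zero_iff_of_nonneg hf).mp
    ((not_lt.mp h).antisymm (Fintype.sum_nonneg hf))) i

section MassIndep

variable {α β 𝕜 : Type*} [Fintype α] [Fintype β] [Field 𝕜] [LinearOrder 𝕜]

/-- Independence of the two coordinates under an unnormalized joint mass function `q`:
`q(a ∣ b) = q(a)` whenever `q(b) > 0`. The context-specific independence `A ⊥ B ∣ x_C, S` is
`MassIndep` of the slice of the joint mass function at `(x_C, x_S)`, for every value `x_S`. -/
def MassIndep (q : α → β → 𝕜) : Prop :=
  ∀ a b, 0 < ∑ a', q a' b →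
    q a b / ∑ a', q a' b = (∑ b', q a b') / ∑ a', ∑ b', q a' b'

variable [IsStrictOrderedRing 𝕜]

theorem massIndep_iff_exists_eq_mul_sum {q : α → β → 𝕜} (hq : ∀ a b, 0 ≤ q a b) :
    MassIndep q ↔ ∃ k : α → 𝕜, ∀ a b, q a b = k a * ∑ a', q a' b := by
  constructor
  · intro h
    refine ⟨fun a => (∑ b, q a b) / ∑ a', ∑ b, q a' b, fun a b => ?_⟩
    by_cases hb : 0 < ∑ a', q a' b
    · exact (div_eq_iff hb.ne').mp (h a b hb)
    · have hzero := eq_zero_of_not_sum_pos (fun a' => hq a' b) hb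
      simp only [hzero, sum_const_zero, mul_zero]
  · rintro ⟨k, hk⟩ a b hb
    have hrow : ∑ b', q a b' = k a * ∑ a', ∑ b', q a' b' := by
      rw [sum_comm, mul_sum]
      exact sum_congr rfl fun b' _ => hk a b'
    have htotal : 0 < ∑ a', ∑ b', q a' b' := by
      rw [sum_comm]
      exact sum_pos' (fun b' _ => sum_nonneg fun a' _ => hq a' b') ⟨b, mem_univ b, hb⟩
    rw [(div_eq_iff hb.ne').mpr (hk a b), (div_eq_iff htotal.ne').mpr hrow]

end MassIndep

theorem stmt7_general {XW XY XU 𝕜 : Type*} [Fintype XW] [Fintype XY] [Fintype XU]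
    [Field 𝕜] [LinearOrder 𝕜] [IsStrictOrderedRing 𝕜]
    {q : XW → XY → XU → 𝕜} (hq : ∀ w y u, 0 ≤ q w y u) {u₀ : XU}
    (hsupp : ∀ y u, 0 < ∑ w, q w y u → 0 < ∑ w, q w y u₀)
    (hWY : MassIndep fun w y => q w y u₀)
    (hWU : ∀ y, MassIndep fun w u => q w y u) (u : XU) :
    MassIndep fun w y => q w y u := by
  obtain ⟨k, hk⟩ := (massIndep_iff_exists_eq_mul_sum fun w y => hq w y u₀).mp hWY
  refine (massIndep_iff_exists_eq_mul_sum fun w y => hq w y u).mpr ⟨k, fun w y => ?_⟩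
  by_cases hyu : 0 < ∑ w', q w' y u
  · obtain ⟨ky, hky⟩ := (massIndep_iff_exists_eq_mul_sum fun w u => hq w y u).mp (hWU y)
    have hky_eq : ky w = k w :=
      mul_right_cancel₀ (hsupp y u hyu).ne' ((hky w u₀).symm.trans (hk w y))
    rw [← hky_eq]
    exact hky w u
  · have hzero := eq_zero_of_not_sum_pos (fun w' => hq w' y u) hyu
    simp only [hzero, sum_const_zero, mul_zero]

/-- Implicit CSI: assume `p(y, c, u) > 0` for all `y, u`.  If
`W ⊥ Y ∣ (Z, U) = (c, u₀)` holds, and `W ⊥ U ∣ Y, Z = c` holds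
(i.e. `p(w ∣ y, c, u) = p(w ∣ y, c)` for all `w, y, u`), then for every `u ∈ 𝒳_U` the
context-specific independence `W ⊥ Y ∣ (Z, U) = (c, u)` holds. -/
theorem stmt7 {XW XY XZ XU : Type} [Fintype XW] [Fintype XY] [Fintype XZ] [Fintype XU]
    (p : XW → XY → XZ → XU → ℝ)
    (hp0 : ∀ w y z u, 0 ≤ p w y z u)
    (hp1 : ∑ w, ∑ y, ∑ z, ∑ u, p w y z u = 1)
    (c : XZ) (u₀ : XU)
    (hpos : ∀ y u, (∑ w, p w y c u) > 0)
    -- W ⊥ Y ∣ (Z, U) = (c, u₀)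
    (h1 : ∀ w y, (∑ w', p w' y c u₀) > 0 →
      p w y c u₀ / (∑ w', p w' y c u₀) =
        (∑ y', p w y' c u₀) / (∑ w', ∑ y', p w' y' c u₀))
    -- W ⊥ U ∣ Y, Z = c
    (h2 : ∀ w y u, p w y c u / (∑ w', p w' y c u) =
      (∑ u', p w y c u') / (∑ w', ∑ u', p w' y c u')) :
    ∀ u : XU, ∀ w y, (∑ w', p w' y c u) > 0 →
      p w y c u / (∑ w', p w' y c u) =
        (∑ y', p w y' c u) / (∑ w', ∑ y', p w' y' c u) :=
  stmt7_general (fun w y u => hp0 w y c u) (fun y _ _ => hpos y u₀) h1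
    fun y w u _ => h2 w y u
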